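/- Let n ≥ 3 be an odd integer and let θ_c := min{θ(i,j) : 1 ≤ i, j ≤ n−1}. Then θ_c > 0, and for every θ with 0 < θ < θ_c: the function Φ_n^θ has no critical zero, its nodal set N(Φ_n^θ) is connected, and ℝ² ∖ N(Φ_n^θ) has exactly two connected components (i.e. Φ_n^θ has exactly two nodal domains). -/

import Mathlib

open Polynomial Real Set

/-- Physicists' Hermite polynomials: `H 0 = 1`, `H 1 = 2X`,
`H (n+2) = 2X * H (n+1) - 2(n+1) * H n`. -/
noncomputable def hermiteH : ℕ → Polynomial ℝ
  | 0 => 1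
  | 1 => Polynomial.C 2 * Polynomial.X
  | (n + 2) => Polynomial.C 2 * Polynomial.X * hermiteH (n + 1)
      - Polynomial.C ((2 * (n + 1) : ℕ) : ℝ) * hermiteH n

/-- `z : Fin m → ℝ` enumerates the zeros of `P` in increasing order. -/
def IsZeroEnum (P : Polynomial ℝ) (m : ℕ) (z : Fin m → ℝ) : Prop :=
  StrictMono z ∧ (∀ i, P.eval (z i) = 0) ∧ (∀ x : ℝ, P.eval x = 0 → ∃ i, x = z i)

/-- The eigenfunction `Φ_n^θ`. -/
noncomputable def Phi (n : ℕ) (θ : ℝ) (p : ℝ × ℝ) : ℝ :=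
  (Real.cos θ * (hermiteH n).eval p.1 + Real.sin θ * (hermiteH n).eval p.2) *
    Real.exp (-(p.1 ^ 2 + p.2 ^ 2) / 2)

/-- A critical zero of `u` : a common zero of `u` and its differential. -/
def IsCriticalZero (u : ℝ × ℝ → ℝ) (p : ℝ × ℝ) : Prop :=
  u p = 0 ∧ fderiv ℝ u p = 0

/-- Nodal set of `u`. -/
def nodalSet (u : ℝ × ℝ → ℝ) : Set (ℝ × ℝ) := {p | u p = 0}

/-- The set of nodal domains of `u`, i.e. of connected components of the
complement of the nodal set. -/
def nodalDomains (u : ℝ × ℝ → ℝ) : Set (Set (ℝ × ℝ)) :=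
  {C | ∃ p, u p ≠ 0 ∧ C = connectedComponentIn {q | u q ≠ 0} p}

/-!
Up to a positive weight, `Φ_n^θ(x, y) = f(x) + g(y)` with `f = cos θ • H_n` and `g = sin θ • H_n`.
Below the first critical angle every critical value of `g` is smaller in absolute value than every
critical value of `f`, which excludes critical zeros and leaves room for a threshold `m` between
the two families. Then `g` is injective where `m ≤ |g|`, with `{|g| < m}` an interval, while `f`
maps each component of `{|f| < m}` bijectively onto `(-m, m)` by Rolle's theorem. Hence the zero set
`f(x) = -g(y)` can be followed continuously and is connected, and so is `{0 < f(x) + g(y)}`: move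
horizontally to a place where `m ≤ |f|`, and then upwards. The symmetry `p ↦ -p` takes care of the
negative set.
-/

open Filter Topology

section Topology

variable {X Y Z : Type*} [TopologicalSpace X] [TopologicalSpace Y] [TopologicalSpace Z]

theorem isPreconnected_preimage_of_isClosedMap {q : X → Y} (hq : IsClosedMap q) {s : Set Y}
    (hs : IsPreconnected s) (hsq : s ⊆ range q)
    (hfib : ∀ x x', q x ∈ s → q x = q x' → ∃ t ⊆ q ⁻¹' s, IsPreconnected t ∧ x ∈ t ∧ x' ∈ t) :
    IsPreconnected (q ⁻¹' s) := by
  rw [isPreconnected_closed_iff] at hs ⊢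
  rintro u v hu hv huv ⟨x, hxs, hxu⟩ ⟨x', hxs', hxv⟩
  have hcover : s ⊆ q '' u ∪ q '' v := by
    rw [← image_union]
    intro y hy
    obtain ⟨z, rfl⟩ := hsq hy
    exact mem_image_of_mem q (huv hy)
  obtain ⟨_, hys, ⟨z, hzu, rfl⟩, ⟨z', hzv, hz⟩⟩ := hs _ _ (hq u hu) (hq v hv) hcover
    ⟨_, hxs, mem_image_of_mem q hxu⟩ ⟨_, hxs', mem_image_of_mem q hxv⟩
  obtain ⟨t, hts, ht, hzt, hzt'⟩ := hfib z z' hys hz.symm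
  exact (isPreconnected_closed_iff.1 ht u v hu hv (hts.trans huv) ⟨z, hzt, hzu⟩
    ⟨z', hzt', hzv⟩).mono (inter_subset_inter_left _ hts)

theorem isPreconnected_fiberProduct_of_injOn [T2Space Z] {f : X → Z} {h : Y → Z} {s : Set X}
    {t : Set Y} (hs : IsCompact s) (hf : ContinuousOn f s) (hinj : InjOn f s)
    (ht : IsPreconnected t) (hh : ContinuousOn h t) (hts : MapsTo h t (f '' s)) :
    IsPreconnected {p : X × Y | p.1 ∈ s ∧ p.2 ∈ t ∧ f p.1 = h p.2} := by
  have := isCompact_iff_compactSpace.1 hs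
  have := isPreconnected_iff_preconnectedSpace.1 ht
  have hemb : IsClosedEmbedding fun x : s => f x :=
    (continuousOn_iff_continuous_domRestrict.1 hf).isClosedEmbedding hinj.injective
  have hlift : ∀ y : t, ∃ x : s, f x = h y := fun y =>
    let ⟨x, hx, hxy⟩ := hts y.2
    ⟨⟨x, hx⟩, hxy⟩
  choose φ hφ using hlift
  have hφc : Continuous φ := by
    rw [hemb.isInducing.continuous_iff, funext hφ (f := (fun x : s => f x) ∘ φ)]
    exact continuousOn_iff_continuous_domRestrict.1 hh
  convert isPreconnected_range (f := fun y : t => ((φ y : X), (y : Y))) (by fun_prop)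
  ext p
  constructor
  · rintro ⟨hx, hy, hxy⟩
    exact ⟨⟨p.2, hy⟩, Prod.ext (hinj (φ _).2 hx ((hφ _).trans hxy.symm)) rfl⟩
  · rintro ⟨y, rfl⟩
    exact ⟨(φ y).2, y.2, hφ y⟩

theorem joinedIn_of_mapsTo_uIcc {γ : ℝ → X} (hγ : Continuous γ) {s : Set X} {a b : ℝ}
    (h : MapsTo γ (uIcc a b) s) : JoinedIn s (γ a) (γ b) :=
  ((JoinedIn.of_segment_subset (segment_eq_uIcc a b).subset).map hγ).mono h.image_subset

end Topology

section LocalExtr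

variable {X Y : Type*} [ConditionallyCompleteLinearOrder X] [DenselyOrdered X] [TopologicalSpace X]
  [OrderTopology X] [LinearOrder Y] [TopologicalSpace Y] [OrderTopology Y] {f : X → Y}

theorem injOn_Icc_of_forall_not_isLocalExtr {a b : X} (hf : ContinuousOn f (Icc a b))
    (h : ∀ z ∈ Ioo a b, ¬ IsLocalExtr f z) : InjOn f (Icc a b) := by
  intro x hx y hy hxy
  by_contra hne
  wlog hlt : x < y generalizing x y
  · exact this hy hx hxy.symm (Ne.symm hne) (lt_of_le_of_ne (not_lt.1 hlt) (Ne.symm hne))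
  obtain ⟨z, hz, hext⟩ := exists_isLocalExtr_Ioo hlt (hf.mono (Icc_subset_Icc hx.1 hy.2)) hxy
  exact h z ⟨hx.1.trans_lt hz.1, hz.2.trans_le hy.2⟩ hext

theorem lt_of_le_of_forall_isLocalExtr_lt [NoMinOrder X] [NoMinOrder Y] (hf : Continuous f)
    (hbot : Tendsto f atBot atBot) {m : Y} (hm : ∀ z, IsLocalExtr f z → f z < m) {x y : X}
    (hx : m ≤ f x) (hxy : x < y) : f x < f y := by
  by_contra! hle
  obtain ⟨c, hxc, hc⟩ : ∃ c, x < c ∧ f c < f x := by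
    rcases hle.lt_or_eq with hlt | heq
    · exact ⟨y, hxy, hlt⟩
    · obtain ⟨c, hc, hext⟩ := exists_isLocalExtr_Ioo hxy hf.continuousOn heq.symm
      exact ⟨c, hc.1, (hm c hext).trans_le hx⟩
  obtain ⟨a, ha, hax⟩ := ((hbot.eventually_lt_atBot (f x)).and (eventually_lt_atBot x)).exists
  obtain ⟨z, hz, hmax⟩ := isCompact_Icc.exists_isMaxOn_mem_subset (s := Ioo a c)
    hf.continuousOn ⟨hax.le, hxc.le⟩ (fun w hw => by
      rw [Icc_sdiff_Ioo_same (hax.trans hxc).le] at hw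
      rcases hw with rfl | rfl
      exacts [ha, hc])
  have hext : IsLocalExtr f z := (hmax.isLocalMax (Icc_mem_nhds hz.1 hz.2)).isExtr
  exact (hm z hext).not_ge (hx.trans (hmax ⟨hax.le, hxc.le⟩))

theorem lt_of_le_of_forall_lt_isLocalExtr [NoMaxOrder X] [NoMaxOrder Y] (hf : Continuous f)
    (htop : Tendsto f atTop atTop) {m : Y} (hm : ∀ z, IsLocalExtr f z → m < f z) {x y : X}
    (hy : f y ≤ m) (hxy : x < y) : f x < f y :=
  lt_of_le_of_forall_isLocalExtr_lt (X := Xᵒᵈ) (Y := Yᵒᵈ) hf htop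
    (fun z hz => hm z hz.symm) hy hxy

theorem le_of_injOn_uIcc {a b x : X} (hf : ContinuousOn f (uIcc a b))
    (hinj : InjOn f (uIcc a b)) (hab : f a ≤ f b) (hx : x ∈ uIcc a b) : f a ≤ f x := by
  by_contra! hlt
  have hsub : uIcc x b ⊆ uIcc a b := uIcc_subset_uIcc_right hx
  obtain ⟨c, hc, hca⟩ := intermediate_value_uIcc (hf.mono hsub)
    (show f a ∈ uIcc (f x) (f b) from mem_uIcc_of_le hlt.le hab)
  obtain rfl : c = a := hinj (hsub hc) left_mem_uIcc hca
  exact hlt.ne' (congrArg f (eq_of_mem_uIcc_of_mem_uIcc hc hx))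

end LocalExtr

theorem isLocalExtr_of_neg_comp_neg {X Y : Type*} [TopologicalSpace X] [InvolutiveNeg X]
    [ContinuousNeg X] [AddCommGroup Y] [PartialOrder Y] [IsOrderedAddMonoid Y] {f : X → Y} {x : X}
    (h : IsLocalExtr (fun y => -f (-y)) (-x)) : IsLocalExtr f x := by
  simpa [Function.comp_def] using (h.comp_continuous continuous_neg.continuousAt).neg

/-- A continuous function running from `-∞` to `+∞` along the real line, such as a real polynomial
of odd degree with positive leading coefficient. -/
structure IsAscending (f : ℝ → ℝ) : Prop where
  continuous : Continuous f
  tendsto_atBot : Tendsto f atBot atBot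
  tendsto_atTop : Tendsto f atTop atTop

theorem isAscending_eval {P : ℝ[X]} (hdeg : Odd P.natDegree) (hP : 0 < P.leadingCoeff) :
    IsAscending fun x => P.eval x where
  continuous := P.continuous
  tendsto_atBot := by
    have hcomp : Tendsto (fun x => (P.comp (-X)).eval x) atTop atBot := by
      refine tendsto_atBot_of_leadingCoeff_nonpos _ (natDegree_pos_iff_degree_pos.1 ?_) ?_
      · simpa [natDegree_comp] using hdeg.pos
      · simpa [leadingCoeff_comp, hdeg.neg_one_pow] using hP.le
    simpa [Function.comp_def] using hcomp.comp tendsto_neg_atBot_atTop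
  tendsto_atTop := tendsto_atTop_of_leadingCoeff_nonneg _
    (natDegree_pos_iff_degree_pos.1 hdeg.pos) hP.le

namespace IsAscending

variable {f : ℝ → ℝ} {m x y : ℝ}

theorem isProperMap (h : IsAscending f) : IsProperMap f := by
  rw [isProperMap_iff_tendsto_cocompact, cocompact_eq_atBot_atTop]
  exact ⟨h.continuous, h.tendsto_atBot.sup_sup h.tendsto_atTop⟩

theorem surjective (h : IsAscending f) : Function.Surjective f :=
  h.continuous.surjective h.tendsto_atTop h.tendsto_atBot

theorem neg_comp_neg (h : IsAscending f) : IsAscending fun x => -f (-x) where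
  continuous := (h.continuous.comp continuous_neg).neg
  tendsto_atBot := tendsto_neg_atTop_atBot.comp (h.tendsto_atTop.comp tendsto_neg_atBot_atTop)
  tendsto_atTop := tendsto_neg_atBot_atTop.comp (h.tendsto_atBot.comp tendsto_neg_atTop_atBot)

section SmallExtrema

variable (h : IsAscending f) (hm : ∀ z, IsLocalExtr f z → |f z| < m)
include h hm

theorem apply_lt_apply_of_le (hx : m ≤ f x) (hxy : x < y) : f x < f y :=
  lt_of_le_of_forall_isLocalExtr_lt h.continuous h.tendsto_atBot
    (fun z hz => (abs_lt.1 (hm z hz)).2) hx hxy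

theorem apply_lt_apply_of_le_neg (hy : f y ≤ -m) (hxy : x < y) : f x < f y :=
  lt_of_le_of_forall_lt_isLocalExtr h.continuous h.tendsto_atTop
    (fun z hz => (abs_lt.1 (hm z hz)).1) hy hxy

theorem eq_of_le_abs (hx : m ≤ |f x|) (hxy : f x = f y) : x = y := by
  by_contra hne
  wlog hlt : x < y generalizing x y
  · exact this (hxy ▸ hx) hxy.symm (Ne.symm hne) (lt_of_le_of_ne (not_lt.1 hlt) (Ne.symm hne))
  rcases le_abs'.1 hx with hneg | hpos
  · exact (h.apply_lt_apply_of_le_neg hm (hxy ▸ hneg) hlt).ne hxy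
  · exact (h.apply_lt_apply_of_le hm hpos hlt).ne hxy

theorem ordConnected_setOf_abs_lt : OrdConnected {x | |f x| < m} := by
  refine ⟨fun a ha b hb z hz => ?_⟩
  rw [mem_ofPred_eq, abs_lt] at ha hb ⊢
  constructor
  · by_contra! hle
    rcases hz.1.eq_or_lt with rfl | hlt
    · exact ha.1.not_ge hle
    · exact ((h.apply_lt_apply_of_le_neg hm hle hlt).trans_le hle).not_gt ha.1
  · by_contra! hle
    rcases hz.2.eq_or_lt with rfl | hlt
    · exact hb.2.not_ge hle
    · exact (hle.trans_lt (h.apply_lt_apply_of_le hm hle hlt)).not_gt hb.2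

theorem isUpperSet_setOf_lt {v : ℝ} (hv : m ≤ |v|) : IsUpperSet {x | v < f x} := by
  intro a z haz (ha : v < f a)
  by_contra hz
  have hle : f z ≤ v := not_lt.1 hz
  have hlt : a < z := lt_of_le_of_ne haz fun he => (he ▸ hle).not_gt ha
  rcases le_abs'.1 hv with hneg | hpos
  · exact ((h.apply_lt_apply_of_le_neg hm (hle.trans hneg) hlt).trans_le hle).not_gt ha
  · exact ((h.apply_lt_apply_of_le hm (hpos.trans ha.le) hlt).trans_le hle).not_gt ha

end SmallExtrema

section LargeExtrema

variable (h : IsAscending f) (hm : ∀ z, IsLocalExtr f z → m ≤ |f z|)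
include h hm

/-- The interval is the closure of the component of `{|f| < m}` containing `x`: there are no local
extrema inside, hence `f` is injective on it by Rolle's theorem. -/
theorem exists_injOn_uIcc (hx : |f x| < m) :
    ∃ a b, x ∈ uIcc a b ∧ InjOn f (uIcc a b) ∧ f a ≤ -m ∧ m ≤ f b := by
  have hclosed : IsClosed {z | m ≤ |f z|} := isClosed_le continuous_const h.continuous.abs
  obtain ⟨a, ⟨ha, hax⟩, hamax⟩ : ∃ a, IsGreatest ({z | m ≤ |f z|} ∩ Iic x) a := by
    obtain ⟨z, hz, hzx⟩ :=
      ((h.tendsto_atBot.eventually_le_atBot (-m)).and (eventually_le_atBot x)).exists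
    exact ⟨_, (hclosed.inter isClosed_Iic).isGreatest_csSup ⟨z, le_abs'.2 (.inl hz), hzx⟩
      ⟨x, fun _ hw => hw.2⟩⟩
  obtain ⟨b, ⟨hb, hxb⟩, hbmin⟩ : ∃ b, IsLeast ({z | m ≤ |f z|} ∩ Ici x) b := by
    obtain ⟨z, hz, hxz⟩ :=
      ((h.tendsto_atTop.eventually_ge_atTop m).and (eventually_ge_atTop x)).exists
    exact ⟨_, (hclosed.inter isClosed_Ici).isLeast_csInf ⟨z, le_abs'.2 (.inr hz), hxz⟩
      ⟨x, fun _ hw => hw.2⟩⟩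
  have hinj : InjOn f (Icc a b) := by
    refine injOn_Icc_of_forall_not_isLocalExtr h.continuous.continuousOn fun z hz hext => ?_
    rcases le_total z x with hzx | hxz
    · exact hz.1.not_ge (hamax ⟨hm z hext, hzx⟩)
    · exact hz.2.not_ge (hbmin ⟨hm z hext, hxz⟩)
  have hab : a ≤ b := hax.trans hxb
  have hxab : x ∈ Icc a b := ⟨hax, hxb⟩
  rw [mem_ofPred_eq, le_abs'] at ha hb
  obtain ⟨hx₁, hx₂⟩ := abs_lt.1 hx
  rcases h.continuous.continuousOn.strictMonoOn_of_injOn_Icc' hab hinj with hmono | hanti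
  · have hfa := hmono.monotoneOn (left_mem_Icc.2 hab) hxab hax
    have hfb := hmono.monotoneOn hxab (right_mem_Icc.2 hab) hxb
    exact ⟨a, b, by rwa [uIcc_of_le hab], by rwa [uIcc_of_le hab],
      ha.resolve_right (by linarith), hb.resolve_left (by linarith)⟩
  · have hfa := hanti.antitoneOn (left_mem_Icc.2 hab) hxab hax
    have hfb := hanti.antitoneOn hxab (right_mem_Icc.2 hab) hxb
    exact ⟨b, a, by rwa [uIcc_of_ge hab], by rwa [uIcc_of_ge hab],
      hb.resolve_right (by linarith), ha.resolve_left (by linarith)⟩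

theorem exists_le_abs_forall_mem_uIcc_le (x : ℝ) :
    ∃ b, m ≤ |f b| ∧ ∀ z ∈ uIcc x b, f x ≤ f z := by
  rcases le_or_gt m |f x| with hx | hx
  · exact ⟨x, hx, by simp⟩
  · obtain ⟨a, b, hxab, hinj, -, hb⟩ := h.exists_injOn_uIcc hm hx
    have hsub : uIcc x b ⊆ uIcc a b := uIcc_subset_uIcc_right hxab
    exact ⟨b, hb.trans (le_abs_self _), fun z => le_of_injOn_uIcc h.continuous.continuousOn
      (hinj.mono hsub) ((le_abs_self _).trans (hx.le.trans hb))⟩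

end LargeExtrema

end IsAscending

section SeparatedSum

variable {f g : ℝ → ℝ} {m : ℝ} (hf : IsAscending f) (hg : IsAscending g)
  (hfm : ∀ z, IsLocalExtr f z → m ≤ |f z|) (hgm : ∀ z, IsLocalExtr g z → |g z| < m)
include hf hg hfm hgm

/-- The zero set is the preimage of the graph of `-f` under the proper map `(x, y) ↦ (x, g y)`.
A fibre with more than one point lies over some `x` with `|f x| < m`; its points are connected
through the curve `x = f⁻¹ (-g y)`, for the branch of `f⁻¹` around `x`. -/
theorem isPreconnected_setOf_add_eq_zero : IsPreconnected {p : ℝ × ℝ | f p.1 + g p.2 = 0} := by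
  have hpre : {p : ℝ × ℝ | f p.1 + g p.2 = 0} = Prod.map id g ⁻¹' range fun x => (x, -f x) := by
    ext p
    constructor
    · exact fun h => ⟨p.1, Prod.ext rfl (eq_neg_of_add_eq_zero_right h).symm⟩
    · rintro ⟨x, hx⟩
      obtain ⟨rfl, hx⟩ := Prod.ext_iff.1 hx
      exact add_eq_zero_iff_neg_eq.2 hx
  rw [hpre]
  refine isPreconnected_preimage_of_isClosedMap (isProperMap_id.prodMap hg.isProperMap).isClosedMap
    (isPreconnected_range (by have := hf.continuous; fun_prop))
    ((Function.surjective_id.prodMap hg.surjective).range_eq ▸ subset_univ _) ?_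
  rintro ⟨x, y⟩ ⟨x', y'⟩ hp hpp'
  obtain ⟨rfl, hgy⟩ : x = x' ∧ g y = g y' := by simpa using hpp'
  have hfg : f x = -g y := neg_eq_iff_eq_neg.1 (by simpa using hp)
  rcases le_or_gt m |g y| with hy | hy
  · obtain rfl := hg.eq_of_le_abs hgm hy hgy
    exact ⟨{(x, y)}, singleton_subset_iff.2 hp, isPreconnected_singleton, rfl, rfl⟩
  obtain ⟨a, b, hxab, hinj, ha, hb⟩ := hf.exists_injOn_uIcc hfm (x := x) (by rwa [hfg, abs_neg])
  have hbranch : MapsTo (fun w => -g w) {w | |g w| < m} (f '' uIcc a b) :=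
      fun w (hw : |g w| < m) => by
    obtain ⟨hw₁, hw₂⟩ := abs_lt.1 hw
    exact intermediate_value_uIcc hf.continuous.continuousOn
      (mem_uIcc_of_le (by linarith) (by linarith))
  have hy' : |g y'| < m := hgy ▸ hy
  have hfg' : f x = -g y' := hgy ▸ hfg
  refine ⟨_, ?_, isPreconnected_fiberProduct_of_injOn isCompact_uIcc hf.continuous.continuousOn
    hinj (hg.ordConnected_setOf_abs_lt hgm).isPreconnected hg.continuous.neg.continuousOn hbranch,
    ⟨hxab, hy, hfg⟩, ⟨hxab, hy', hfg'⟩⟩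
  rw [← hpre]
  exact fun p hp => eq_neg_iff_add_eq_zero.1 hp.2.2

/-- From any point one can move horizontally, without decreasing `f`, to a vertical line on which
the set is a ray pointing upwards; high up, any two of these rays are joined by a segment. -/
theorem isPathConnected_setOf_zero_lt_add : IsPathConnected {p : ℝ × ℝ | 0 < f p.1 + g p.2} := by
  set S := {p : ℝ × ℝ | 0 < f p.1 + g p.2}
  have hslide : ∀ p ∈ S, ∃ b, m ≤ |f b| ∧ JoinedIn S p (b, p.2) := fun p hp => by
    obtain ⟨b, hb, hle⟩ := hf.exists_le_abs_forall_mem_uIcc_le hfm p.1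
    exact ⟨b, hb, joinedIn_of_mapsTo_uIcc (by fun_prop) (γ := fun z => (z, p.2)) fun z hz =>
      hp.trans_le (add_le_add_left (hle z hz) _)⟩
  have hrise : ∀ b, m ≤ |f b| → ∀ y, (b, y) ∈ S → ∀ w ≥ y, JoinedIn S (b, y) (b, w) :=
    fun b hb y hy w hw => joinedIn_of_mapsTo_uIcc (by fun_prop) fun z hz => by
      rw [uIcc_of_le hw] at hz
      have hlt : -f b < g z := hg.isUpperSet_setOf_lt hgm (by rwa [abs_neg]) hz.1
        (neg_lt_iff_pos_add'.2 hy : -f b < g y)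
      exact neg_lt_iff_pos_add'.1 hlt
  have hcross : ∀ b c, ∀ᶠ w in atTop, JoinedIn S (b, w) (c, w) := fun b c => by
    obtain ⟨z, -, hz⟩ := isCompact_uIcc.exists_isMinOn nonempty_uIcc
      (hf.continuous.continuousOn (s := uIcc b c))
    filter_upwards [hg.tendsto_atTop.eventually_gt_atTop (-f z)] with w hw
    exact joinedIn_of_mapsTo_uIcc (by fun_prop) (γ := fun z => (z, w)) fun x hx =>
      (neg_lt_iff_pos_add'.1 hw).trans_le (add_le_add_left (hz hx) _)
  obtain ⟨y, hy⟩ := hg.surjective (1 - f 0)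
  refine isPathConnected_iff.2 ⟨⟨(0, y), by simp [S, hy]⟩, fun p hp q hq => ?_⟩
  obtain ⟨b, hb, hpb⟩ := hslide p hp
  obtain ⟨c, hc, hqc⟩ := hslide q hq
  obtain ⟨w, hbc, hpw, hqw⟩ :=
    ((hcross b c).and ((eventually_ge_atTop p.2).and (eventually_ge_atTop q.2))).exists
  have hup : JoinedIn S p (b, w) := hpb.trans (hrise b hb _ hpb.target_mem w hpw)
  have hdown : JoinedIn S (c, w) q := (hqc.trans (hrise c hc _ hqc.target_mem w hqw)).symm
  exact (hup.trans hbc).trans hdown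

theorem isPathConnected_setOf_add_lt_zero : IsPathConnected {p : ℝ × ℝ | f p.1 + g p.2 < 0} := by
  have hfm' : ∀ z, IsLocalExtr (fun x => -f (-x)) z → m ≤ |-f (-z)| := fun z hz => by
    rw [abs_neg]
    exact hfm _ (isLocalExtr_of_neg_comp_neg (by rwa [neg_neg]))
  have hgm' : ∀ z, IsLocalExtr (fun x => -g (-x)) z → |-g (-z)| < m := fun z hz => by
    rw [abs_neg]
    exact hgm _ (isLocalExtr_of_neg_comp_neg (by rwa [neg_neg]))
  convert (isPathConnected_setOf_zero_lt_add hf.neg_comp_neg hg.neg_comp_neg hfm' hgm').image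
    (continuous_neg (G := ℝ × ℝ)) using 1
  ext p
  simp [← neg_add_rev, add_comm]

end SeparatedSum

section NodalDomains

variable {X : Type*} [TopologicalSpace X]

theorem connectedComponentIn_ne_zero_eq_setOf_pos {u : X → ℝ} (hu : Continuous u)
    (hpos : IsPreconnected {q | 0 < u q}) {p : X} (hp : 0 < u p) :
    connectedComponentIn {q | u q ≠ 0} p = {q | 0 < u q} := by
  refine Subset.antisymm (fun q hq => ?_)
    (hpos.subset_connectedComponentIn hp fun q hq => (ne_of_gt hq : u q ≠ 0))
  by_contra hqp
  obtain ⟨z, hz, hz0⟩ := isPreconnected_connectedComponentIn.intermediate_value hq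
    (mem_connectedComponentIn (F := {q | u q ≠ 0}) hp.ne') hu.continuousOn ⟨not_lt.1 hqp, hp.le⟩
  exact connectedComponentIn_subset _ _ hz hz0

theorem connectedComponentIn_ne_zero_eq_setOf_neg {u : X → ℝ} (hu : Continuous u)
    (hneg : IsPreconnected {q | u q < 0}) {p : X} (hp : u p < 0) :
    connectedComponentIn {q | u q ≠ 0} p = {q | u q < 0} := by
  simpa using connectedComponentIn_ne_zero_eq_setOf_pos hu.neg (by simpa using hneg)
    (neg_pos.2 hp)

theorem ncard_nodalDomains_eq_two {u : ℝ × ℝ → ℝ} (hu : Continuous u)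
    (hpos : IsConnected {p | 0 < u p}) (hneg : IsConnected {p | u p < 0}) :
    (nodalDomains u).ncard = 2 := by
  obtain ⟨⟨a, ha⟩, hpos⟩ := hpos
  obtain ⟨⟨b, hb⟩, hneg⟩ := hneg
  have hdomains : nodalDomains u = {{p | 0 < u p}, {p | u p < 0}} := by
    ext D
    constructor
    · rintro ⟨p, hp, rfl⟩
      rcases hp.lt_or_gt with hp | hp
      · exact .inr (connectedComponentIn_ne_zero_eq_setOf_neg hu hneg hp)
      · exact .inl (connectedComponentIn_ne_zero_eq_setOf_pos hu hpos hp)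
    · rintro (rfl | rfl)
      · exact ⟨a, ne_of_gt ha, (connectedComponentIn_ne_zero_eq_setOf_pos hu hpos ha).symm⟩
      · exact ⟨b, ne_of_lt hb, (connectedComponentIn_ne_zero_eq_setOf_neg hu hneg hb).symm⟩
  refine hdomains ▸ ncard_pair fun he => ?_
  have ha' : a ∈ {p | u p < 0} := he ▸ ha
  exact lt_asymm (show 0 < u a from ha) ha'

variable {u w : ℝ × ℝ → ℝ}

theorem nodalSet_mul (hw : ∀ p, w p ≠ 0) : nodalSet (fun p => u p * w p) = nodalSet u := by
  simp [nodalSet, hw]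

theorem nodalDomains_mul (hw : ∀ p, w p ≠ 0) :
    nodalDomains (fun p => u p * w p) = nodalDomains u := by
  simp [nodalDomains, hw]

theorem isCriticalZero_mul_iff {p : ℝ × ℝ} (hu : DifferentiableAt ℝ u p)
    (hw : DifferentiableAt ℝ w p) (hwp : w p ≠ 0) :
    IsCriticalZero (fun q => u q * w q) p ↔ IsCriticalZero u p := by
  simp only [IsCriticalZero, mul_eq_zero, hwp, or_false]
  refine and_congr_right fun hup => ?_
  rw [fderiv_fun_mul hu hw, hup, zero_smul, zero_add, smul_eq_zero_iff_right hwp]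

theorem IsCriticalZero.deriv_eq_zero {f g : ℝ → ℝ} {p : ℝ × ℝ}
    (hf : DifferentiableAt ℝ f p.1) (hg : DifferentiableAt ℝ g p.2)
    (hp : IsCriticalZero (fun q => f q.1 + g q.2) p) : deriv f p.1 = 0 ∧ deriv g p.2 = 0 := by
  have hfst : HasFDerivAt (fun q : ℝ × ℝ => f q.1)
      (deriv f p.1 • ContinuousLinearMap.fst ℝ ℝ ℝ) p :=
    hf.hasDerivAt.comp_hasFDerivAt p hasFDerivAt_fst
  have hsnd : HasFDerivAt (fun q : ℝ × ℝ => g q.2)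
      (deriv g p.2 • ContinuousLinearMap.snd ℝ ℝ ℝ) p :=
    hg.hasDerivAt.comp_hasFDerivAt p hasFDerivAt_snd
  have h0 := (hfst.add hsnd).fderiv.symm.trans hp.2
  exact ⟨by simpa using congr($h0 (1, 0)), by simpa using congr($h0 (0, 1))⟩

end NodalDomains

section Polynomial

variable {P Q : ℝ[X]}

theorem exists_between_abs_critical_values (hP : P.natDegree ≠ 0) (hQ : Q.natDegree ≠ 0)
    (hsep : ∀ s t, P.derivative.eval s = 0 → Q.derivative.eval t = 0 → |Q.eval t| < |P.eval s|) :
    ∃ m, (∀ s, IsLocalExtr (fun x => P.eval x) s → m ≤ |P.eval s|) ∧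
      ∀ t, IsLocalExtr (fun y => Q.eval y) t → |Q.eval t| < m := by
  have hP' : P.derivative ≠ 0 := mt derivative_eq_zero.1 hP
  have hQ' : Q.derivative ≠ 0 := mt derivative_eq_zero.1 hQ
  obtain ⟨m, hQm, hPm⟩ := Order.exists_between_finsets
    (Q.derivative.roots.toFinset.image fun t => |Q.eval t|)
    (P.derivative.roots.toFinset.image fun s => |P.eval s|) (by simp_all)
  refine ⟨m, fun s hs => (hPm _ (Finset.mem_image_of_mem _ ?_)).le,
    fun t ht => hQm _ (Finset.mem_image_of_mem _ ?_)⟩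
  · simpa [hP'] using hs.deriv_eq_zero
  · simpa [hQ'] using ht.deriv_eq_zero

theorem not_isCriticalZero_eval_add_eval
    (hsep : ∀ s t, P.derivative.eval s = 0 → Q.derivative.eval t = 0 → |Q.eval t| < |P.eval s|)
    (p : ℝ × ℝ) : ¬ IsCriticalZero (fun q => P.eval q.1 + Q.eval q.2) p := by
  intro hp
  obtain ⟨hs, ht⟩ := hp.deriv_eq_zero P.differentiableAt Q.differentiableAt
  rw [Polynomial.deriv] at hs ht
  refine (hsep _ _ hs ht).ne ?_
  rw [eq_neg_of_add_eq_zero_right hp.1, abs_neg]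

section OddDegree

variable (hPdeg : Odd P.natDegree) (hP : 0 < P.leadingCoeff) (hQdeg : Odd Q.natDegree)
  (hQ : 0 < Q.leadingCoeff)
  (hsep : ∀ s t, P.derivative.eval s = 0 → Q.derivative.eval t = 0 → |Q.eval t| < |P.eval s|)
include hPdeg hP hQdeg hQ hsep

theorem isConnected_nodalSet_eval_add_eval :
    IsConnected (nodalSet fun p => P.eval p.1 + Q.eval p.2) := by
  obtain ⟨m, hPm, hQm⟩ := exists_between_abs_critical_values hPdeg.pos.ne' hQdeg.pos.ne' hsep
  have hP' := isAscending_eval hPdeg hP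
  have hQ' := isAscending_eval hQdeg hQ
  obtain ⟨y, hy⟩ := hQ'.surjective (-P.eval 0)
  exact ⟨⟨(0, y), by simp [nodalSet, hy]⟩, isPreconnected_setOf_add_eq_zero hP' hQ' hPm hQm⟩

theorem ncard_nodalDomains_eval_add_eval :
    (nodalDomains fun p => P.eval p.1 + Q.eval p.2).ncard = 2 := by
  obtain ⟨m, hPm, hQm⟩ := exists_between_abs_critical_values hPdeg.pos.ne' hQdeg.pos.ne' hsep
  have hP' := isAscending_eval hPdeg hP
  have hQ' := isAscending_eval hQdeg hQ
  exact ncard_nodalDomains_eq_two (by fun_prop)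
    (isPathConnected_setOf_zero_lt_add hP' hQ' hPm hQm).isConnected
    (isPathConnected_setOf_add_lt_zero hP' hQ' hPm hQm).isConnected

end OddDegree

end Polynomial

section Hermite

theorem derivative_hermiteH_succ :
    ∀ n : ℕ, derivative (hermiteH (n + 1)) = C (2 * (n + 1 : ℝ)) * hermiteH n
  | 0 => by simp [hermiteH]
  | 1 => by
    simp only [hermiteH, derivative_sub, derivative_mul, derivative_C, derivative_X,
      derivative_one]
    push_cast
    simp only [map_mul, map_add, map_ofNat, map_one]
    ring
  | n + 2 => by
    rw [hermiteH, derivative_sub, derivative_mul, derivative_mul, derivative_C_mul,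
      derivative_hermiteH_succ (n + 1), derivative_hermiteH_succ n]
    simp only [hermiteH, derivative_C, derivative_X]
    push_cast
    simp only [map_mul, map_add, map_natCast, map_ofNat, map_one]
    ring

theorem hermiteH_eval_neg (x : ℝ) :
    ∀ n : ℕ, (hermiteH n).eval (-x) = (-1) ^ n * (hermiteH n).eval x
  | 0 => by simp [hermiteH]
  | 1 => by simp [hermiteH]
  | n + 2 => by
    simp only [hermiteH, eval_sub, eval_mul, eval_C, eval_X, hermiteH_eval_neg x (n + 1),
      hermiteH_eval_neg x n]
    ring

theorem hermiteH_eval_succ_ne_zero {x : ℝ} :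
    ∀ {n : ℕ}, (hermiteH n).eval x = 0 → (hermiteH (n + 1)).eval x ≠ 0
  | 0, h => by simp [hermiteH] at h
  | n + 1, h => fun h' => by
    have hn : (n + 1 : ℝ) ≠ 0 := by positivity
    exact hermiteH_eval_succ_ne_zero (by simpa [hermiteH, h, hn] using h') h

theorem natDegree_hermiteH_le : ∀ n : ℕ, (hermiteH n).natDegree ≤ n
  | 0 => by simp [hermiteH]
  | 1 => by
    rw [hermiteH]
    compute_degree
  | n + 2 => by
    have h₁ := natDegree_hermiteH_le (n + 1)
    have h₀ := natDegree_hermiteH_le n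
    rw [hermiteH]
    compute_degree
    omega

theorem coeff_hermiteH_self : ∀ n : ℕ, (hermiteH n).coeff n = 2 ^ n
  | 0 => by simp [hermiteH]
  | 1 => by simp [hermiteH]
  | n + 2 => by
    have hn : (hermiteH n).coeff (n + 2) = 0 :=
      coeff_eq_zero_of_natDegree_lt ((natDegree_hermiteH_le n).trans_lt (by omega))
    rw [hermiteH, coeff_sub, coeff_C_mul, hn, mul_assoc, coeff_C_mul, coeff_X_mul,
      coeff_hermiteH_self (n + 1)]
    ring

theorem natDegree_hermiteH (n : ℕ) : (hermiteH n).natDegree = n :=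
  natDegree_eq_of_le_of_coeff_ne_zero (natDegree_hermiteH_le n) (by simp [coeff_hermiteH_self])

theorem leadingCoeff_hermiteH (n : ℕ) : (hermiteH n).leadingCoeff = 2 ^ n := by
  rw [leadingCoeff, natDegree_hermiteH, coeff_hermiteH_self]

theorem odd_natDegree_C_mul_hermiteH {c : ℝ} (hc : c ≠ 0) {n : ℕ} (hn : Odd n) :
    Odd (C c * hermiteH n).natDegree := by
  rwa [natDegree_C_mul hc, natDegree_hermiteH]

theorem leadingCoeff_C_mul_hermiteH_pos {c : ℝ} (hc : 0 < c) (n : ℕ) :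
    0 < (C c * hermiteH n).leadingCoeff := by
  rw [leadingCoeff_mul, leadingCoeff_C, leadingCoeff_hermiteH]
  positivity

theorem IsZeroEnum.exists_hermiteH_eval_eq_neg {k l : ℕ} {z : Fin l → ℝ}
    (hz : IsZeroEnum (hermiteH k) l z) (hk : Even k) (j : Fin l) :
    ∃ j', (hermiteH (k + 1)).eval (z j') = -(hermiteH (k + 1)).eval (z j) := by
  obtain ⟨j', hj'⟩ := hz.2.2 (-z j) (by rw [hermiteH_eval_neg, hz.2.1, mul_zero])
  refine ⟨j', ?_⟩
  rw [← hj', hermiteH_eval_neg, hk.add_one.neg_one_pow, neg_one_mul]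

end Hermite

section Angle

variable {a b θ Θ Θ' : ℝ}

theorem mul_cos_mul_add_sin_mul_pos (ha : a ≠ 0) (hθ : 0 ≤ θ) (hθΘ : θ < Θ) (hΘ : Θ < π)
    (h : cos Θ * a + sin Θ * b = 0) : 0 < a * (cos θ * a + sin θ * b) := by
  have hsin : 0 < sin Θ := sin_pos_of_pos_of_lt_pi (hθ.trans_lt hθΘ) hΘ
  have hsub : 0 < sin (Θ - θ) := sin_pos_of_pos_of_lt_pi (sub_pos.2 hθΘ) (by linarith)
  have hrot : sin Θ * (cos θ * a + sin θ * b) = sin (Θ - θ) * a := by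
    rw [sin_sub]
    linear_combination sin θ * h
  refine pos_of_mul_pos_right (a := sin Θ) ?_ hsin.le
  calc 0 < sin (Θ - θ) * (a * a) := mul_pos hsub (mul_self_pos.2 ha)
    _ = sin Θ * (a * (cos θ * a + sin θ * b)) := by linear_combination -a * hrot

theorem abs_sin_mul_lt_cos_mul_abs (ha : a ≠ 0) (hθ : 0 ≤ θ)
    (hθΘ : θ < Θ) (hΘ : Θ < π) (h : cos Θ * a + sin Θ * b = 0)
    (hθΘ' : θ < Θ') (hΘ' : Θ' < π) (h' : cos Θ' * a + sin Θ' * -b = 0) :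
    |sin θ * b| < cos θ * |a| := by
  have hadd := mul_cos_mul_add_sin_mul_pos ha hθ hθΘ hΘ h
  have hsub := mul_cos_mul_add_sin_mul_pos ha hθ hθΘ' hΘ' h'
  refine lt_of_mul_lt_mul_left (a := |a|) ?_ (abs_nonneg a)
  calc |a| * |sin θ * b| = |a * (sin θ * b)| := (abs_mul _ _).symm
    _ < cos θ * a ^ 2 := abs_lt.2 ⟨by linarith, by linarith⟩
    _ = |a| * (cos θ * |a|) := by rw [← sq_abs]; ring

end Angle

section Eigenfunction

theorem Phi_eq_mul_exp (n : ℕ) (θ : ℝ) :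
    Phi n θ = fun p => ((C (cos θ) * hermiteH n).eval p.1 + (C (sin θ) * hermiteH n).eval p.2) *
      exp (-(p.1 ^ 2 + p.2 ^ 2) / 2) := by
  ext p
  rw [Phi, eval_C_mul, eval_C_mul]

variable {k : ℕ} {θ : ℝ} (hcos : 0 < cos θ) (hsin : 0 < sin θ)
  (hsep : ∀ s t, (hermiteH k).eval s = 0 → (hermiteH k).eval t = 0 →
    |sin θ * (hermiteH (k + 1)).eval t| < cos θ * |(hermiteH (k + 1)).eval s|)
include hcos hsin hsep

theorem abs_eval_lt_abs_eval_of_derivative_eval_eq_zero {s t : ℝ}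
    (hs : (C (cos θ) * hermiteH (k + 1)).derivative.eval s = 0)
    (ht : (C (sin θ) * hermiteH (k + 1)).derivative.eval t = 0) :
    |(C (sin θ) * hermiteH (k + 1)).eval t| < |(C (cos θ) * hermiteH (k + 1)).eval s| := by
  have hk : (k + 1 : ℝ) ≠ 0 := by positivity
  rw [eval_C_mul, eval_C_mul, abs_mul (cos θ), abs_of_pos hcos]
  exact hsep s t (by simpa [derivative_hermiteH_succ, hcos.ne', hk] using hs)
    (by simpa [derivative_hermiteH_succ, hsin.ne', hk] using ht)

theorem not_isCriticalZero_Phi (p : ℝ × ℝ) : ¬ IsCriticalZero (Phi (k + 1) θ) p := by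
  rw [Phi_eq_mul_exp, isCriticalZero_mul_iff (by fun_prop) (by fun_prop) (exp_pos _).ne']
  exact not_isCriticalZero_eval_add_eval
    (fun _ _ => abs_eval_lt_abs_eval_of_derivative_eval_eq_zero hcos hsin hsep) p

variable (hk : Even k)
include hk

theorem isConnected_nodalSet_Phi : IsConnected (nodalSet (Phi (k + 1) θ)) := by
  rw [Phi_eq_mul_exp, nodalSet_mul fun p => (exp_pos _).ne']
  exact isConnected_nodalSet_eval_add_eval
    (odd_natDegree_C_mul_hermiteH hcos.ne' hk.add_one) (leadingCoeff_C_mul_hermiteH_pos hcos _)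
    (odd_natDegree_C_mul_hermiteH hsin.ne' hk.add_one) (leadingCoeff_C_mul_hermiteH_pos hsin _)
    fun _ _ => abs_eval_lt_abs_eval_of_derivative_eval_eq_zero hcos hsin hsep

theorem ncard_nodalDomains_Phi : (nodalDomains (Phi (k + 1) θ)).ncard = 2 := by
  rw [Phi_eq_mul_exp, nodalDomains_mul fun p => (exp_pos _).ne']
  exact ncard_nodalDomains_eval_add_eval
    (odd_natDegree_C_mul_hermiteH hcos.ne' hk.add_one) (leadingCoeff_C_mul_hermiteH_pos hcos _)
    (odd_natDegree_C_mul_hermiteH hsin.ne' hk.add_one) (leadingCoeff_C_mul_hermiteH_pos hsin _)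
    fun _ _ => abs_eval_lt_abs_eval_of_derivative_eval_eq_zero hcos hsin hsep

end Eigenfunction

/-- Let `n ≥ 3` be odd, `tz` enumerate the zeros of `H_{n-1}`,
and for `i j`, let `Θ i j ∈ (0,π)` be the unique angle with
`cos (Θ i j) * H_n(tz i) + sin (Θ i j) * H_n(tz j) = 0`. Let `θc` be the least of
the `Θ i j`. Then `θc > 0` and for all `0 < θ < θc`, `Φ_n^θ` has no critical
zero, its nodal set is connected, and it has exactly two nodal domains. -/
theorem below_first_critical_value_two_nodal_domains
    (n : ℕ) (hn3 : 3 ≤ n) (hodd : Odd n)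
    (tz : Fin (n - 1) → ℝ) (htz : IsZeroEnum (hermiteH (n - 1)) (n - 1) tz)
    (Θ : Fin (n - 1) → Fin (n - 1) → ℝ)
    (hΘ : ∀ i j, Θ i j ∈ Set.Ioo 0 π ∧
      Real.cos (Θ i j) * (hermiteH n).eval (tz i)
        + Real.sin (Θ i j) * (hermiteH n).eval (tz j) = 0)
    (θc : ℝ) (hθc : IsLeast {x : ℝ | ∃ i j, x = Θ i j} θc) :
    0 < θc ∧ ∀ θ : ℝ, 0 < θ → θ < θc →
      (∀ p : ℝ × ℝ, ¬ IsCriticalZero (Phi n θ) p) ∧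
      IsConnected (nodalSet (Phi n θ)) ∧
      (nodalDomains (Phi n θ)).ncard = 2 := by
  obtain ⟨k, rfl⟩ := hodd
  obtain ⟨⟨i₀, j₀, rfl⟩, hleast⟩ := hθc
  refine ⟨(hΘ i₀ j₀).1.1, fun θ hθ hθc => ?_⟩
  have hlt : ∀ i j, θ < Θ i j := fun i j => hθc.trans_le (hleast ⟨i, j, rfl⟩)
  have hsep : ∀ s t, (hermiteH (2 * k)).eval s = 0 → (hermiteH (2 * k)).eval t = 0 →
      |sin θ * (hermiteH (2 * k + 1)).eval t| < cos θ * |(hermiteH (2 * k + 1)).eval s| := by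
    intro s t hs ht
    obtain ⟨i, rfl⟩ := htz.2.2 s hs
    obtain ⟨j, rfl⟩ := htz.2.2 t ht
    obtain ⟨j', hj'⟩ := htz.exists_hermiteH_eval_eq_neg (even_two_mul k) j
    exact abs_sin_mul_lt_cos_mul_abs (hermiteH_eval_succ_ne_zero hs) hθ.le
      (hlt i j) (hΘ i j).1.2 (hΘ i j).2 (hlt i j') (hΘ i j').1.2 (hj' ▸ (hΘ i j').2)
  have hsin : 0 < sin θ := sin_pos_of_pos_of_lt_pi hθ ((hlt i₀ j₀).trans (hΘ i₀ j₀).1.2)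
  have hcos : 0 < cos θ := pos_of_mul_pos_left
    ((abs_nonneg _).trans_lt (hsep _ _ (htz.2.1 i₀) (htz.2.1 i₀))) (abs_nonneg _)
  exact ⟨not_isCriticalZero_Phi hcos hsin hsep,
    isConnected_nodalSet_Phi hcos hsin hsep (even_two_mul k),
    ncard_nodalDomains_Phi hcos hsin hsep (even_two_mul k)⟩
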